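/- Let M be a loopless matroid of rank d+1 on the ground set E = {0,1,…,n}, let 1 ≤ k ≤ d, and let ∅ = F_0 ⊊ F_1 ⊊ ⋯ ⊊ F_{k−1} ⊊ F_k = E be a chain of flats of M. For each flat G of M satisfying F_i ⊊ G ⊊ F_{i+1} for some 0 ≤ i ≤ k−1, set w(G) = (−1)^{d−k} · β(M|G/F_i) · β(M|F_{i+1}/G) · ∏_{j ≠ i, 0 ≤ j ≤ k−1} β(M|F_{j+1}/F_j). Then the vector ∑_G w(G)·e_G, summed over all such flats G, lies in the real linear span of the vectors e_{F_1}, …, e_{F_{k−1}}, e_E in ℝ^{n+1}. (This is the balancing condition for the k-th Chern-Schwartz-MacPherson cycle csm_k(M) at the cone corresponding to the chain F_1 ⊊ ⋯ ⊊ F_{k−1}; consequently csm_k(M) is a balanced fan.) -/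

import Mathlib

open Matroid Set

/-- The Möbius function of a collection of "flats" (finsets), defined recursively:
`mob flats F G = 0` if `F ⊄ G`, `1` if `F = G`, and `-∑_{F ⊆ G' ⊊ G} mob flats F G'` otherwise,
the sum being over members `G'` of `flats`. -/
noncomputable def mob {α : Type*} [DecidableEq α] (flats : Finset (Finset α)) :
    Finset α → Finset α → ℤ
  | F, G =>
    if F ⊆ G then
      if F = G then 1
      else - ∑ G' ∈ (flats.filter fun G' => F ⊆ G' ∧ G' ⊂ G).attach,
        mob flats F G'.1
    else 0
termination_by F G => G.card
decreasing_by
  exact Finset.card_lt_card (Finset.mem_filter.mp G'.2).2.2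

/-- The rank of a set `X` in a matroid `M`: the largest cardinality of an independent
subset of `X`. -/
noncomputable def rk {α : Type*} (M : Matroid α) (X : Set α) : ℕ :=
  sSup (Set.ncard '' {I | M.Indep I ∧ I ⊆ X})

/-- An element `e` is a loop of `M` if it belongs to the ground set but to no base. -/
def mLoop {α : Type*} (M : Matroid α) (e : α) : Prop :=
  e ∈ M.E ∧ ∀ B, M.IsBase B → e ∉ B

/-- An element `e` is a coloop of `M` if it belongs to every base. -/
def mColoop {α : Type*} (M : Matroid α) (e : α) : Prop :=
  ∀ B, M.IsBase B → e ∈ B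

/-- A matroid is loopless if it has no loops. -/
def mLoopless {α : Type*} (M : Matroid α) : Prop := ∀ e, ¬ mLoop M e

/-- Contraction of a set `C` in a matroid `M`, defined by duality:
`M / C = (M✶ \ C)✶`, where deletion is restriction to the complement. -/
noncomputable def mContr {α : Type*} (M : Matroid α) (C : Set α) : Matroid α :=
  (M✶ ↾ (M✶.E \ C))✶

/-- The minor `M|G/F` of `M` obtained by restricting to `G` and contracting `F`. -/
noncomputable def mMinor {α : Type*} (M : Matroid α) (G F : Set α) : Matroid α :=
  mContr (M ↾ G) F

open Classical in
/-- The finset of all flats of a matroid on `Fin m`, as finsets. -/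
noncomputable def flatsF {m : ℕ} (M : Matroid (Fin m)) : Finset (Finset (Fin m)) :=
  Finset.univ.filter fun F => M.IsFlat ↑F

open Classical in
/-- The beta invariant `β(M) = (-1)^{r(M)} ∑_{F ∈ L(M)} μ(∅,F) r(F)` of a loopless
matroid `M`; it is `0` if `M` has a loop. -/
noncomputable def betaInv {m : ℕ} (M : Matroid (Fin m)) : ℤ :=
  if mLoopless M then
    (-1) ^ (rk M M.E) * ∑ F ∈ flatsF M, mob (flatsF M) ∅ F * (rk M ↑F : ℤ)
  else 0

/-- The 0/1 indicator vector of a finset `S ⊆ {0,…,m-1}`, as a vector in `ℝ^m`. -/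
def eVec {m : ℕ} (S : Finset (Fin m)) : Fin m → ℝ := fun i => if i ∈ S then 1 else 0

/-!
Fix a step `F ⊆ F'` of the chain. It suffices to show that the sum `S i` of
`β(M|G/F) β(M|F'/G)` over the flats `F ⊊ G ⊊ F'` containing `i` does not depend on `i ∈ F' \ F`:
the vector `∑ β(M|G/F) β(M|F'/G) e_G` is then constant on `F` and on `F' \ F` and vanishes outside
`F'`, so it is a combination of `e_F` and `e_{F'}`.

Crapo's formula `β(M|G/F) = ± ∑_{H ∋ i} μ(F, H)` and Möbius inversion collapse `S i`, up to sign, to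
`∑_{H ∋ i} μ(F, H) (r(H) - r(F'))`. Choose `φ` with `φ (t + 1) - φ t = 2 (t - r(F'))`. Weisner's
theorem says that `∑ μ(F, H) φ(r(H ∨ i)) = 0`; since `r(H ∨ i)` is `r(H)` or `r(H) + 1` according to
whether `i ∈ H`, this turns `2 S i` into `± ∑ μ(F, H) φ(r(H) + 1)`, where `i` no longer occurs.
-/

section Moebius

open IncidenceAlgebra

section Preorder

variable {P R : Type*} [Preorder P] [LocallyFiniteOrder P] [AddCommMonoid R]

lemma sum_Icc_sum_Icc_comm (f : P → P → R) (a b : P) :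
    ∑ x ∈ Finset.Icc a b, ∑ y ∈ Finset.Icc x b, f x y =
      ∑ y ∈ Finset.Icc a b, ∑ x ∈ Finset.Icc a y, f x y := by
  refine Finset.sum_comm' fun x y => ?_
  simp only [Finset.mem_Icc]
  exact ⟨fun ⟨⟨hax, _⟩, hxy, hyb⟩ => ⟨⟨hax, hxy⟩, hax.trans hxy, hyb⟩,
    fun ⟨⟨hax, hxy⟩, _, hyb⟩ => ⟨⟨hax, hxy.trans hyb⟩, hxy, hyb⟩⟩

end Preorder

section PartialOrder

variable {P Q R : Type*} [PartialOrder P] [LocallyFiniteOrder P] [DecidableEq P]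
  [PartialOrder Q] [LocallyFiniteOrder Q] [DecidableEq Q] [Ring R]

lemma mu_apply_of_ordConnected_range (e : P ↪o Q) (he : (range e).OrdConnected) (a b : P) :
    mu R (e a) (e b) = mu R a b := by
  have map_Ico (c : P) :
      (Finset.Ico a c).map e.toEmbedding = Finset.Ico (e a) (e c) :=
    Finset.coe_injective (by simpa using e.image_Ico he a c)
  induction h : (Finset.Icc a b).card using Nat.strong_induction_on generalizing b with
  | h n ih =>
    rw [mu_apply, mu_apply a b, ← map_Ico, Finset.sum_map]
    simp only [e.injective.eq_iff]
    congr 2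
    refine Finset.sum_congr rfl fun x hx => ih _ ?_ x rfl
    obtain ⟨hax, hxb⟩ := Finset.mem_Ico.mp hx
    exact h ▸ Finset.card_lt_card
      (Finset.Icc_ssubset_Icc_right (hax.trans hxb.le) le_rfl hxb)

lemma sum_Icc_mu_mul_const (a b : P) (c : R) :
    ∑ x ∈ Finset.Icc a b, mu R a x * c = if a = b then c else 0 := by
  rw [← Finset.sum_mul, sum_Icc_mu_right, ite_mul, one_mul, zero_mul]

lemma sum_Icc_sum_Icc_mu_mul (f : P → R) {a b : P} (hab : a ≤ b) :
    ∑ x ∈ Finset.Icc a b, ∑ y ∈ Finset.Icc x b, mu R x y * f y = f a := by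
  simp only [sum_Icc_sum_Icc_comm, ← Finset.sum_mul, sum_Icc_mu_left, ite_mul, one_mul, zero_mul,
    Finset.sum_ite_eq, Finset.mem_Icc, le_refl, hab, and_self, if_true]

/-- The beta invariant of the interval `[a, b]` of a poset with rank function `r`, without its
global sign. The rank is normalised to vanish at `b` rather than at `a`: by
`sum_Icc_mu_mul_sub_left` this does not change the value, and it makes `intervalBeta r · b` the
Möbius inverse of `r · - r b`. -/
def intervalBeta (r : P → R) (a b : P) : R :=
  ∑ x ∈ Finset.Icc a b, mu R a x * (r x - r b)

lemma sum_Icc_mu_mul_sub_left (r : P → R) (a b : P) :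
    ∑ x ∈ Finset.Icc a b, mu R a x * (r x - r a) = intervalBeta r a b := by
  rw [intervalBeta, ← sub_eq_zero, ← Finset.sum_sub_distrib]
  simp only [← mul_sub, sub_sub_sub_cancel_left]
  rw [sum_Icc_mu_mul_const, ite_eq_right_iff]
  rintro rfl
  exact sub_self _

lemma intervalBeta_self (r : P → R) (a : P) : intervalBeta r a a = 0 := by
  simp [intervalBeta]

lemma sum_Icc_intervalBeta_left (r : P → R) {a b : P} (hab : a ≤ b) :
    ∑ x ∈ Finset.Icc a b, intervalBeta r x b = r a - r b :=
  sum_Icc_sum_Icc_mu_mul (fun x => r x - r b) hab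

lemma sum_Ioo_filter_intervalBeta_mul (r : P → R) (a b : P) (p : P → Prop) [DecidablePred p] :
    ∑ x ∈ Finset.Ioo a b with p x, intervalBeta r a x * intervalBeta r x b =
      ∑ x ∈ Finset.Icc a b with p x, intervalBeta r a x * intervalBeta r x b := by
  refine Finset.sum_subset (Finset.filter_subset_filter _ Finset.Ioo_subset_Icc_self)
    fun x hx hx' => ?_
  obtain ⟨hx, hpx⟩ := Finset.mem_filter.mp hx
  obtain ⟨hax, hxb⟩ := Finset.mem_Icc.mp hx
  rcases hax.eq_or_lt with rfl | hax
  · rw [intervalBeta_self, zero_mul]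
  rcases hxb.eq_or_lt with rfl | hxb
  · rw [intervalBeta_self, mul_zero]
  exact absurd (Finset.mem_filter.mpr ⟨Finset.mem_Ioo.mpr ⟨hax, hxb⟩, hpx⟩) hx'

end PartialOrder

section SemilatticeSup

variable {L R : Type*} [SemilatticeSup L] [LocallyFiniteOrder L] [DecidableEq L]
  {a b c : L}

/- Weisner's theorem, tested against an arbitrary function of the join. Expand `f (x ⊔ a)` by Möbius
inversion over `[x ⊔ a, c]`; exchanging the sums leaves `∑ x ∈ [b, z], μ(b, x)` with `a ≤ z`, which
vanishes because `b ≠ z`. -/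
theorem sum_Icc_mu_mul_sup_eq_zero [Ring R] (hab : ¬ a ≤ b) (hac : a ≤ c) (f : L → R) :
    ∑ x ∈ Finset.Icc b c, mu R b x * f (x ⊔ a) = 0 := by
  classical
  let g (z : L) : R := ∑ y ∈ Finset.Icc z c, mu R z y * f y
  have f_eq (x : L) (hx : x ∈ Finset.Icc b c) :
      f (x ⊔ a) = ∑ z ∈ Finset.Icc x c, if a ≤ z then g z else 0 := by
    rw [← Finset.sum_filter, ← sum_Icc_sum_Icc_mu_mul f (sup_le (Finset.mem_Icc.mp hx).2 hac)]
    congr 1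
    ext z
    simp only [Finset.mem_filter, Finset.mem_Icc, sup_le_iff]
    tauto
  calc ∑ x ∈ Finset.Icc b c, mu R b x * f (x ⊔ a)
      = ∑ x ∈ Finset.Icc b c, ∑ z ∈ Finset.Icc x c, mu R b x * if a ≤ z then g z else 0 :=
        Finset.sum_congr rfl fun x hx => by rw [f_eq x hx, Finset.mul_sum]
    _ = ∑ z ∈ Finset.Icc b c, ∑ x ∈ Finset.Icc b z, mu R b x * if a ≤ z then g z else 0 :=
        sum_Icc_sum_Icc_comm _ _ _
    _ = 0 := Finset.sum_eq_zero fun z _ => by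
        rw [sum_Icc_mu_mul_const, ite_eq_right_iff]
        rintro rfl
        exact if_neg hab

variable [DecidableLE L]

lemma sum_Icc_filter_mu_mul_sub [Ring R] {r : L → R}
    (hr : ∀ x, ¬ a ≤ x → r (x ⊔ a) = r x + 1) (hab : ¬ a ≤ b) (hac : a ≤ c) (φ : R → R) :
    ∑ x ∈ Finset.Icc b c with a ≤ x, mu R b x * (φ (r x + 1) - φ (r x)) =
      ∑ x ∈ Finset.Icc b c, mu R b x * φ (r x + 1) := by
  rw [Finset.sum_filter, eq_comm, ← sub_eq_zero, ← Finset.sum_sub_distrib]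
  refine (Finset.sum_congr rfl fun x _ => ?_).trans
    (sum_Icc_mu_mul_sup_eq_zero hab hac fun x => φ (r x))
  split_ifs with hax
  · rw [sup_eq_left.mpr hax, ← mul_sub, sub_sub_cancel]
  · rw [hr x hax, sub_zero]

theorem sum_Icc_filter_mu_eq_intervalBeta [Ring R] {r : L → R}
    (hr : ∀ x, ¬ a ≤ x → r (x ⊔ a) = r x + 1) (hab : ¬ a ≤ b) (hac : a ≤ c) :
    ∑ x ∈ Finset.Icc b c with a ≤ x, mu R b x = intervalBeta r b c := by
  have h := sum_Icc_filter_mu_mul_sub hr hab hac (fun t => t - 1 - r c)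
  simpa only [add_sub_cancel_right, sub_sub_sub_cancel_right, sub_sub_cancel, mul_one,
    intervalBeta] using h

lemma sum_Ioo_filter_intervalBeta_mul_eq [Ring R] {r : L → R}
    (hr : ∀ x, ¬ a ≤ x → r (x ⊔ a) = r x + 1) (hab : ¬ a ≤ b) :
    ∑ x ∈ Finset.Ioo b c with a ≤ x, intervalBeta r b x * intervalBeta r x c =
      ∑ x ∈ Finset.Icc b c with a ≤ x, mu R b x * (r x - r c) := by
  calc ∑ x ∈ Finset.Ioo b c with a ≤ x, intervalBeta r b x * intervalBeta r x c
      = ∑ y ∈ Finset.Icc b c with a ≤ y, intervalBeta r b y * intervalBeta r y c :=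
        sum_Ioo_filter_intervalBeta_mul r b c _
    _ = ∑ y ∈ Finset.Icc b c, ∑ x ∈ Finset.Icc b y,
          if a ≤ x then mu R b x * intervalBeta r y c else 0 := by
        rw [Finset.sum_filter]
        refine Finset.sum_congr rfl fun y _ => ?_
        rw [← Finset.sum_filter, ← Finset.sum_mul]
        split_ifs with hay
        · rw [sum_Icc_filter_mu_eq_intervalBeta hr hab hay]
        · rw [Finset.filter_false_of_mem fun x hx hax => hay (hax.trans (Finset.mem_Icc.mp hx).2),
            Finset.sum_empty, zero_mul]
    _ = ∑ x ∈ Finset.Icc b c, ∑ y ∈ Finset.Icc x c,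
          if a ≤ x then mu R b x * intervalBeta r y c else 0 :=
        (sum_Icc_sum_Icc_comm _ _ _).symm
    _ = ∑ x ∈ Finset.Icc b c with a ≤ x, mu R b x * (r x - r c) := by
        rw [Finset.sum_filter]
        refine Finset.sum_congr rfl fun x hx => ?_
        split_ifs
        · rw [← Finset.mul_sum, sum_Icc_intervalBeta_left r (Finset.mem_Icc.mp hx).2]
        · exact Finset.sum_const_zero

lemma two_mul_sum_Ioo_filter_intervalBeta_mul [CommRing R] {r : L → R}
    (hr : ∀ x, ¬ a ≤ x → r (x ⊔ a) = r x + 1) (hab : ¬ a ≤ b) (hac : a ≤ c) :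
    2 * ∑ x ∈ Finset.Ioo b c with a ≤ x, intervalBeta r b x * intervalBeta r x c =
      ∑ x ∈ Finset.Icc b c, mu R b x * ((r x + 1) * (r x - 2 * r c)) := by
  -- `φ t = t (t - 1) - 2 (r c) t` is a discrete antiderivative of `2 (t - r c)`.
  have h := sum_Icc_filter_mu_mul_sub hr hab hac (fun t => t * (t - 1 - 2 * r c))
  rw [sum_Ioo_filter_intervalBeta_mul_eq hr hab, Finset.mul_sum]
  convert h using 2 <;> ring

end SemilatticeSup

end Moebius

section Flats

open IncidenceAlgebra

section Mob

variable {α : Type*} [DecidableEq α]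

lemma mob_coe_eq_mu (𝓕 : Finset (Finset α)) (F G : 𝓕) : mob 𝓕 F G = mu ℤ F G := by
  have map_Ico (K : 𝓕) : (Finset.Ico F K).map (Function.Embedding.subtype _) =
      𝓕.filter fun H => F.1 ⊆ H ∧ H ⊂ K := by
    ext H
    simp [← Subtype.coe_le_coe, ← Subtype.coe_lt_coe, and_comm, and_assoc]
  induction h : G.1.card using Nat.strong_induction_on generalizing G with
  | h n ih =>
    rw [mob, mu_apply]
    simp only [Subtype.coe_inj]
    split_ifs with hFG hne hne
    · rfl
    · rw [Finset.sum_attach _ (mob 𝓕 F), ← map_Ico, Finset.sum_map]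
      exact congrArg Neg.neg <| Finset.sum_congr rfl fun H hH =>
        ih _ (h ▸ Finset.card_lt_card (Finset.mem_Ico.mp hH).2) H rfl
    · exact absurd (congrArg Subtype.val hne).subset hFG
    · rw [Finset.Ico_eq_empty (a := F) fun h => hFG h.le, Finset.sum_empty, neg_zero]

lemma sum_filter_ssubset_ssubset_eq_sum_Ioo {R : Type*} [AddCommMonoid R]
    {𝓕 : Finset (Finset α)} (F G : 𝓕) (f : Finset α → R) :
    ∑ H ∈ 𝓕.filter (fun H => F.1 ⊂ H ∧ H ⊂ G), f H = ∑ H ∈ Finset.Ioo F G, f H := by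
  have map_Ioo : (Finset.Ioo F G).map (Function.Embedding.subtype _) =
      𝓕.filter fun H => F.1 ⊂ H ∧ H ⊂ G := by
    ext H
    simp [← Subtype.coe_lt_coe, and_comm, and_assoc]
  rw [← map_Ioo, Finset.sum_map]
  rfl

end Mob

section Rank

variable {α : Type*} (M : Matroid α) [M.RankFinite]

lemma cast_rk_eq_eRk (X : Set α) : (rk M X : ℕ∞) = M.eRk X := by
  obtain ⟨I, hI⟩ := M.exists_isBasis' X
  have hmax : IsGreatest (ncard '' {J | M.Indep J ∧ J ⊆ X}) I.ncard := by
    refine ⟨⟨I, ⟨hI.indep, hI.subset⟩, rfl⟩, ?_⟩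
    rintro _ ⟨J, ⟨hJ, hJX⟩, rfl⟩
    have h := hJ.encard_le_eRk_of_subset hJX
    rw [← hI.encard_eq_eRk, ← hJ.finite.cast_ncard_eq, ← hI.indep.finite.cast_ncard_eq] at h
    exact_mod_cast h
  rw [rk, hmax.csSup_eq, hI.indep.finite.cast_ncard_eq, hI.encard_eq_eRk]

lemma rk_closure (X : Set α) : rk M (M.closure X) = rk M X := by
  have h := M.eRk_closure_eq X
  rw [← cast_rk_eq_eRk, ← cast_rk_eq_eRk] at h
  exact_mod_cast h

variable {M} in
lemma rk_insert_of_notMem_closure {X : Set α} {i : α} (hi : i ∈ M.E \ M.closure X) :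
    rk M (insert i X) = rk M X + 1 := by
  have h := eRk_insert_eq_add_one hi
  rw [← cast_rk_eq_eRk, ← cast_rk_eq_eRk] at h
  exact_mod_cast h

end Rank

variable {m : ℕ} {M : Matroid (Fin m)}

lemma mem_flatsF {F : Finset (Fin m)} : F ∈ flatsF M ↔ M.IsFlat ↑F := by
  simp [flatsF]

lemma isFlat_coe (F : flatsF M) : M.IsFlat ↑F.1 := mem_flatsF.mp F.2

/-- The closure of a set, as an element of the lattice of flats. -/
noncomputable def flatClosure (M : Matroid (Fin m)) (X : Set (Fin m)) : flatsF M :=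
  ⟨(M.closure X).toFinite.toFinset, mem_flatsF.mpr (by simp)⟩

lemma coe_flatClosure (X : Set (Fin m)) : ((flatClosure M X).1 : Set (Fin m)) = M.closure X :=
  Finite.coe_toFinset _

lemma flatClosure_le_iff {X : Set (Fin m)} (hX : X ⊆ M.E) {F : flatsF M} :
    flatClosure M X ≤ F ↔ X ⊆ F.1 := by
  rw [← Subtype.coe_le_coe, ← Finset.coe_subset, coe_flatClosure]
  refine ⟨(M.subset_closure X).trans, fun h => ?_⟩
  exact (M.closure_subset_closure h).trans (isFlat_coe F).closure.subset

lemma flatClosure_singleton_le_iff {i : Fin m} (hi : i ∈ M.E) {F : flatsF M} :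
    flatClosure M {i} ≤ F ↔ i ∈ F.1 := by
  rw [flatClosure_le_iff (singleton_subset_iff.mpr hi), singleton_subset_iff, Finset.mem_coe]

lemma coe_union_coe_subset_ground (F G : flatsF M) : (F.1 ∪ G.1 : Set (Fin m)) ⊆ M.E :=
  union_subset (isFlat_coe F).subset_ground (isFlat_coe G).subset_ground

/-- The join in the lattice of flats is the closure of the union. -/
noncomputable instance instSemilatticeSupFlatsF : SemilatticeSup (flatsF M) where
  sup F G := flatClosure M (F.1 ∪ G.1)
  le_sup_left F G := Finset.coe_subset.mp <| subset_union_left.trans <|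
    (flatClosure_le_iff (coe_union_coe_subset_ground F G)).mp le_rfl
  le_sup_right F G := Finset.coe_subset.mp <| subset_union_right.trans <|
    (flatClosure_le_iff (coe_union_coe_subset_ground F G)).mp le_rfl
  sup_le F G _ hF hG := (flatClosure_le_iff (coe_union_coe_subset_ground F G)).mpr <|
    union_subset (Finset.coe_subset.mpr hF) (Finset.coe_subset.mpr hG)

lemma coe_sup_flatClosure (F : flatsF M) (X : Set (Fin m)) :
    ((F ⊔ flatClosure M X).1 : Set (Fin m)) = M.closure (F.1 ∪ X) := by
  rw [← closure_union_closure_right_eq, ← coe_flatClosure X]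
  exact coe_flatClosure _

/-- The rank function of the lattice of flats, with integer values. -/
noncomputable def flatRank (M : Matroid (Fin m)) (F : flatsF M) : ℤ := rk M ↑F.1

lemma flatRank_sup_flatClosure_singleton {i : Fin m} (hi : i ∈ M.E) {F : flatsF M}
    (hiF : ¬ flatClosure M {i} ≤ F) :
    flatRank M (F ⊔ flatClosure M {i}) = flatRank M F + 1 := by
  have hicl : i ∈ M.E \ M.closure F.1 := by
    rw [(isFlat_coe F).closure]
    exact ⟨hi, mt (flatClosure_singleton_le_iff hi).mpr hiF⟩
  simp only [flatRank, coe_sup_flatClosure, rk_closure, union_singleton,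
    rk_insert_of_notMem_closure hicl, Nat.cast_add, Nat.cast_one]

lemma exists_sum_Ioo_filter_mem_intervalBeta_mul_eq (F F' : flatsF M) :
    ∃ C : ℤ, ∀ i ∈ F'.1 \ F.1, ∑ G ∈ Finset.Ioo F F' with i ∈ G.1,
      intervalBeta (flatRank M) F G * intervalBeta (flatRank M) G F' = C := by
  refine ⟨(∑ G ∈ Finset.Icc F F', mu ℤ F G *
    ((flatRank M G + 1) * (flatRank M G - 2 * flatRank M F'))) / 2, fun i hi => ?_⟩
  obtain ⟨hiF', hiF⟩ := Finset.mem_sdiff.mp hi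
  have hiE := (isFlat_coe F').subset_ground hiF'
  have h := two_mul_sum_Ioo_filter_intervalBeta_mul
    (fun _ => flatRank_sup_flatClosure_singleton hiE)
    (mt (flatClosure_singleton_le_iff hiE).mp hiF) ((flatClosure_singleton_le_iff hiE).mpr hiF')
  simp only [flatClosure_singleton_le_iff hiE] at h
  omega

lemma sum_Ioo_intervalBeta_mul_smul_eVec_mem_span {F F' : flatsF M} (hFF' : F ≤ F') :
    ∑ G ∈ Finset.Ioo F F', ((intervalBeta (flatRank M) F G * intervalBeta (flatRank M) G F' : ℤ) :
      ℝ) • eVec G.1 ∈ Submodule.span ℝ {eVec F.1, eVec F'.1} := by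
  obtain ⟨C, hC⟩ := exists_sum_Ioo_filter_mem_intervalBeta_mul_eq F F'
  set w : flatsF M → ℤ := fun G => intervalBeta (flatRank M) F G * intervalBeta (flatRank M) G F'
  have coord (i : Fin m) : (∑ G ∈ Finset.Ioo F F', (w G : ℝ) • eVec G.1) i =
      ((∑ G ∈ Finset.Ioo F F' with i ∈ G.1, w G : ℤ) : ℝ) := by
    simp [eVec, Finset.sum_filter]
  refine Submodule.mem_span_pair.mpr ⟨((∑ G ∈ Finset.Ioo F F', w G) - C : ℤ), C, ?_⟩
  ext i
  rw [coord]
  by_cases hiF : i ∈ F.1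
  · have filter_eq : {G ∈ Finset.Ioo F F' | i ∈ G.1} = Finset.Ioo F F' :=
      Finset.filter_true_of_mem fun G hG => (Finset.mem_Ioo.mp hG).1.le hiF
    simp [eVec, hiF, hFF' hiF, filter_eq]
  by_cases hiF' : i ∈ F'.1
  · rw [hC i (Finset.mem_sdiff.mpr ⟨hiF', hiF⟩)]
    simp [eVec, hiF, hiF']
  · have filter_eq : {G ∈ Finset.Ioo F F' | i ∈ G.1} = ∅ :=
      Finset.filter_false_of_mem fun G hG hiG => hiF' ((Finset.mem_Ioo.mp hG).2.le hiG)
    simp [eVec, hiF, hiF', filter_eq]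

end Flats

section Minors

open IncidenceAlgebra

section Matroid

variable {α : Type*} {M : Matroid α} {C R X : Set α}

lemma mLoopless_of_isFlat_empty (h : M.IsFlat ∅) : mLoopless M := by
  rintro e ⟨he, hB⟩
  exact ((isLoop_iff_forall_notMem_isBase (e := e)).mpr hB).mem_of_isFlat h

lemma isFlat_restrict_iff (hR : M.IsFlat R) : (M ↾ R).IsFlat X ↔ M.IsFlat X ∧ X ⊆ R := by
  suffices h : X ⊆ R → ((M ↾ R).IsFlat X ↔ M.IsFlat X) from
    ⟨fun hX => ⟨(h hX.subset_ground).mp hX, hX.subset_ground⟩, fun hX => (h hX.2).mpr hX.1⟩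
  intro hXR
  rw [isFlat_iff_closure_eq, isFlat_iff_closure_eq, M.restrict_closure_eq hXR hR.subset_ground,
    inter_eq_left.mpr ((M.closure_subset_closure hXR).trans hR.closure.subset)]

lemma isFlat_contract_iff (hC : C ⊆ M.E) :
    (M ／ C).IsFlat X ↔ M.IsFlat (X ∪ C) ∧ Disjoint X C := by
  rw [isFlat_iff_closure_eq, isFlat_iff_closure_eq, contract_closure_eq]
  constructor
  · intro h
    have hC' : C ⊆ M.closure (X ∪ C) := (M.subset_closure C).trans
      (M.closure_subset_closure subset_union_right)
    refine ⟨?_, h ▸ disjoint_sdiff_left⟩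
    rw [← sdiff_union_of_subset hC', h]
  · rintro ⟨h, hXC⟩
    rw [h, union_sdiff_right, hXC.sdiff_eq_left]

lemma isFlat_mMinor_iff {F G : Set α} (hG : M.IsFlat G) (hFG : F ⊆ G) :
    (mMinor M G F).IsFlat X ↔ M.IsFlat (X ∪ F) ∧ X ⊆ G \ F := by
  change ((M ↾ G) ／ F).IsFlat X ↔ _
  rw [isFlat_contract_iff hFG, isFlat_restrict_iff hG, union_subset_iff, subset_sdiff]
  tauto

lemma eRk_contract_add_eRk (M : Matroid α) (C X : Set α) :
    (M ／ C).eRk X + M.eRk C = M.eRk (X ∪ C) := by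
  obtain ⟨I, hI⟩ := M.exists_isBasis' C
  obtain ⟨J, hJ, hIJ⟩ := hI.indep.subset_isBasis'_of_subset
    (hI.subset.trans (subset_union_right : C ⊆ X ∪ C))
  have inter_eq : J ∩ C = I := (hI.eq_of_subset_indep (hJ.indep.inter_right _)
    (subset_inter hIJ hI.subset) inter_subset_right).symm
  have hJC := hJ.contract_isBasis' hI (hJ.indep.subset (union_subset sdiff_subset hIJ))
  have eRk_eq : (M ／ C).eRk X = (J \ C).encard := by
    rw [hJC.encard_eq_eRk, union_sdiff_right, ← eRk_inter_ground, ← eRk_inter_ground _ (X \ C),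
      contract_ground]
    congr 1
    tauto_set
  rw [eRk_eq, hI.eRk_eq_encard, hJ.eRk_eq_encard, ← inter_eq, encard_sdiff_add_encard_inter]

lemma rk_mMinor_add_rk [M.RankFinite] {F G : Set α} (hFG : F ⊆ G) (hX : X ⊆ G) :
    rk (mMinor M G F) X + rk M F = rk M (X ∪ F) := by
  have h := eRk_contract_add_eRk (M ↾ G) F X
  rw [restrict_eRk_eq _ hFG, restrict_eRk_eq _ (union_subset hX hFG)] at h
  have : (mMinor M G F).RankFinite := inferInstanceAs ((M ↾ G) ／ F).RankFinite
  rw [← cast_rk_eq_eRk, ← cast_rk_eq_eRk, ← cast_rk_eq_eRk] at h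
  exact_mod_cast h

end Matroid

variable {m : ℕ} {M : Matroid (Fin m)} {F G : flatsF M}

lemma mem_flatsF_mMinor_iff (hFG : F ≤ G) {X : Finset (Fin m)} :
    X ∈ flatsF (mMinor M G.1 F.1) ↔ X ∪ F.1 ∈ flatsF M ∧ X ⊆ G.1 \ F.1 := by
  rw [mem_flatsF, mem_flatsF, isFlat_mMinor_iff (isFlat_coe G) (Finset.coe_subset.mpr hFG),
    Finset.coe_union, ← Finset.coe_sdiff, Finset.coe_subset]

/-- The lattice of flats of `M|G/F`, identified with the interval `[F, G]` of the lattice of flats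
of `M` by `X ↦ X ∪ F`. -/
def minorFlatEmbedding (hFG : F ≤ G) : flatsF (mMinor M G.1 F.1) ↪o flatsF M :=
  OrderEmbedding.ofMapLEIff
    (fun X => ⟨X.1 ∪ F.1, ((mem_flatsF_mMinor_iff hFG).mp X.2).1⟩) fun X Y => by
      have hX := (Finset.subset_sdiff.mp ((mem_flatsF_mMinor_iff hFG).mp X.2).2).2
      change X.1 ∪ F.1 ⊆ Y.1 ∪ F.1 ↔ X.1 ⊆ Y.1
      exact ⟨fun h => hX.left_le_of_le_sup_right (Finset.subset_union_left.trans h),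
        fun h => Finset.union_subset_union_left h⟩

lemma coe_minorFlatEmbedding (hFG : F ≤ G) (X : flatsF (mMinor M G.1 F.1)) :
    (minorFlatEmbedding hFG X).1 = X.1 ∪ F.1 := rfl

lemma range_minorFlatEmbedding (hFG : F ≤ G) : range (minorFlatEmbedding hFG) = Icc F G := by
  ext H
  constructor
  · rintro ⟨X, rfl⟩
    have hX := ((mem_flatsF_mMinor_iff hFG).mp X.2).2.trans Finset.sdiff_subset
    exact ⟨Finset.subset_union_right, Finset.union_subset hX hFG⟩
  · rintro ⟨hFH, hHG⟩
    have union_eq : H.1 \ F.1 ∪ F.1 = H.1 := Finset.sdiff_union_of_subset hFH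
    refine ⟨⟨H.1 \ F.1, (mem_flatsF_mMinor_iff hFG).mpr ⟨union_eq.symm ▸ H.2, ?_⟩⟩,
      Subtype.ext union_eq⟩
    exact Finset.sdiff_subset_sdiff hHG subset_rfl

lemma flatRank_minorFlatEmbedding (hFG : F ≤ G) (X : flatsF (mMinor M G.1 F.1)) :
    flatRank M (minorFlatEmbedding hFG X) = flatRank _ X + flatRank M F := by
  have hX := ((mem_flatsF_mMinor_iff hFG).mp X.2).2.trans Finset.sdiff_subset
  simp only [flatRank, coe_minorFlatEmbedding, Finset.coe_union, ← Nat.cast_add,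
    ← rk_mMinor_add_rk (M := M) (Finset.coe_subset.mpr hFG) (Finset.coe_subset.mpr hX)]

theorem betaInv_mMinor (hFG : F ≤ G) :
    betaInv (mMinor M G.1 F.1) =
      (-1) ^ (rk M F.1 + rk M G.1) * intervalBeta (flatRank M) F G := by
  have empty_mem : ∅ ∈ flatsF (mMinor M G.1 F.1) :=
    (mem_flatsF_mMinor_iff hFG).mpr ⟨by simp, Finset.empty_subset _⟩
  have loopless : mLoopless (mMinor M G.1 F.1) :=
    mLoopless_of_isFlat_empty (by simpa [mem_flatsF] using empty_mem)
  let e := minorFlatEmbedding hFG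
  have e_empty : e ⟨∅, empty_mem⟩ = F := Subtype.ext (Finset.empty_union _)
  have sign : (-1 : ℤ) ^ rk (mMinor M G.1 F.1) (G.1 \ F.1) = (-1) ^ (rk M F.1 + rk M G.1) := by
    have h := rk_mMinor_add_rk (M := M) (F := F.1) (G := G.1) (X := G.1 \ F.1)
      (Finset.coe_subset.mpr hFG) sdiff_subset
    rw [sdiff_union_of_subset (Finset.coe_subset.mpr hFG)] at h
    rw [← h, add_left_comm, pow_add, ← two_mul, (even_two_mul _).neg_one_pow, mul_one]
  have sum_eq : ∑ X ∈ flatsF (mMinor M G.1 F.1), mob (flatsF (mMinor M G.1 F.1)) ∅ X *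
      (rk (mMinor M G.1 F.1) X : ℤ) = intervalBeta (flatRank M) F G := by
    have map_univ : Finset.univ.map e.toEmbedding = Finset.Icc F G :=
      Finset.coe_injective (by simpa using range_minorFlatEmbedding hFG)
    rw [← sum_Icc_mu_mul_sub_left, ← map_univ, Finset.sum_map, ← Finset.sum_coe_sort]
    refine Finset.sum_congr rfl fun X _ => ?_
    have mob_eq : mob (flatsF (mMinor M G.1 F.1)) ∅ X = mu ℤ F (e X) := by
      rw [← congrArg (mu ℤ · (e X)) e_empty, mu_apply_of_ordConnected_range]
      · exact mob_coe_eq_mu _ ⟨∅, empty_mem⟩ X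
      · exact (range_minorFlatEmbedding hFG).symm ▸ ordConnected_Icc
    rw [mob_eq]
    congr 1
    exact eq_sub_of_add_eq (flatRank_minorFlatEmbedding hFG X).symm
  rw [betaInv, if_pos loopless, sum_eq]
  exact congrArg (· * _) sign

end Minors

section Balancing

variable {m : ℕ} {M : Matroid (Fin m)}

lemma betaInv_mMinor_mul_betaInv_mMinor {F G F' : flatsF M} (hFG : F ≤ G) (hGF' : G ≤ F') :
    betaInv (mMinor M G.1 F.1) * betaInv (mMinor M F'.1 G.1) =
      (-1) ^ (rk M F.1 + rk M F'.1) *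
        (intervalBeta (flatRank M) F G * intervalBeta (flatRank M) G F') := by
  have hG : (-1 : ℤ) ^ rk M G.1 * (-1) ^ rk M G.1 = 1 := by
    rw [← mul_pow, neg_one_mul, neg_neg, one_pow]
  rw [betaInv_mMinor hFG, betaInv_mMinor hGF', pow_add, pow_add, pow_add]
  linear_combination ((-1) ^ rk M F.1 * (-1) ^ rk M F'.1 *
    (intervalBeta (flatRank M) F G * intervalBeta (flatRank M) G F')) * hG

theorem sum_betaInv_mul_smul_eVec_mem_span {F F' : Finset (Fin m)} (hF : M.IsFlat ↑F)
    (hF' : M.IsFlat ↑F') (hFF' : F ⊆ F') :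
    ∑ G ∈ (flatsF M).filter (fun G => F ⊂ G ∧ G ⊂ F'),
      ((betaInv (mMinor M ↑G ↑F) * betaInv (mMinor M ↑F' ↑G) : ℤ) : ℝ) • eVec G ∈
        Submodule.span ℝ {eVec F, eVec F'} := by
  lift F to flatsF M using mem_flatsF.mpr hF
  lift F' to flatsF M using mem_flatsF.mpr hF'
  have h := Submodule.smul_mem _ (((-1) ^ (rk M F.1 + rk M F'.1) : ℤ) : ℝ)
    (sum_Ioo_intervalBeta_mul_smul_eVec_mem_span hFF')
  rw [Finset.smul_sum] at h
  rw [sum_filter_ssubset_ssubset_eq_sum_Ioo]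
  convert h using 2 with G hG
  obtain ⟨hFG, hGF'⟩ := Finset.mem_Ioo.mp hG
  rw [betaInv_mMinor_mul_betaInv_mMinor hFG.le hGF'.le, Int.cast_mul, mul_smul]

theorem csm_k_balanced_general {k : ℕ} (M : Matroid (Fin m)) (Fc : Fin (k + 1) → Finset (Fin m))
    (hmono : Monotone Fc) (hflat : ∀ j, M.IsFlat ↑(Fc j)) (c : ℤ) :
    (∑ i : Fin k,
        ∑ G ∈ (flatsF M).filter (fun G => Fc i.castSucc ⊂ G ∧ G ⊂ Fc i.succ),
          ((c *
            (betaInv (mMinor M ↑G ↑(Fc i.castSucc)) * betaInv (mMinor M ↑(Fc i.succ) ↑G) *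
              ∏ j ∈ Finset.univ.erase i,
                betaInv (mMinor M ↑(Fc j.succ) ↑(Fc j.castSucc))) : ℤ) : ℝ) • eVec G)
      ∈ Submodule.span ℝ (range fun j => eVec (Fc j)) := by
  refine Submodule.sum_mem _ fun i _ => ?_
  have ends_mem : ({eVec (Fc i.castSucc), eVec (Fc i.succ)} : Set (Fin m → ℝ)) ⊆
      range fun j => eVec (Fc j) := pair_subset (mem_range_self _) (mem_range_self _)
  have h := Submodule.smul_mem _
    ((c * ∏ j ∈ Finset.univ.erase i, betaInv (mMinor M ↑(Fc j.succ) ↑(Fc j.castSucc)) : ℤ) : ℝ)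
    (Submodule.span_mono ends_mem (sum_betaInv_mul_smul_eVec_mem_span (hflat i.castSucc)
      (hflat i.succ) (hmono (Fin.castSucc_lt_succ).le)))
  rw [Finset.smul_sum] at h
  convert h using 2 with G
  rw [smul_smul, ← Int.cast_mul]
  congr 2
  ring

lemma span_range_eVec_le {k : ℕ} {Fc : Fin (k + 1) → Finset (Fin m)} (h0 : Fc 0 = ∅) :
    Submodule.span ℝ (range fun j => eVec (Fc j)) ≤
      Submodule.span ℝ {v | ∃ j : Fin k, v = eVec (Fc j.succ)} := by
  rw [Submodule.span_le, range_subset_iff]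
  refine Fin.cases ?_ fun j => Submodule.subset_span ⟨j, rfl⟩
  have eVec_zero : eVec (Fc 0) = 0 := by
    ext
    simp [eVec, h0]
  exact eVec_zero ▸ Submodule.zero_mem _

end Balancing

/-- Balancing of the `k`-th CSM cycle of a rank `d+1` loopless matroid `M`
on `{0,…,n}` at the cone of a chain of flats `∅ = F₀ ⊊ F₁ ⊊ ⋯ ⊊ F_{k-1} ⊊ F_k = E`:
the weighted sum `∑_G w(G)·e_G`, where `G` ranges over the flats with `F_i ⊊ G ⊊ F_{i+1}`
for some `i` and
`w(G) = (-1)^{d-k}·β(M|G/F_i)·β(M|F_{i+1}/G)·∏_{j ≠ i} β(M|F_{j+1}/F_j)`,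
lies in the span of `e_{F₁}, …, e_{F_{k-1}}, e_E`. -/
theorem csm_k_balanced {n d k : ℕ} (hk : 1 ≤ k) (hkd : k ≤ d)
    (M : Matroid (Fin (n + 1))) (hE : M.E = Set.univ) (hM : mLoopless M)
    (hrk : rk M M.E = d + 1)
    (Fc : Fin (k + 1) → Finset (Fin (n + 1)))
    (hmono : StrictMono Fc) (h0 : Fc 0 = ∅) (hlast : Fc (Fin.last k) = Finset.univ)
    (hflat : ∀ j, M.IsFlat ↑(Fc j)) :
    (∑ i : Fin k,
        ∑ G ∈ (flatsF M).filter (fun G => Fc i.castSucc ⊂ G ∧ G ⊂ Fc i.succ),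
          (((-1 : ℤ) ^ (d - k) *
            (betaInv (mMinor M ↑G ↑(Fc i.castSucc)) * betaInv (mMinor M ↑(Fc i.succ) ↑G) *
              ∏ j ∈ Finset.univ.erase i,
                betaInv (mMinor M ↑(Fc j.succ) ↑(Fc j.castSucc))) : ℤ) : ℝ) • eVec G)
      ∈ Submodule.span ℝ {v : Fin (n + 1) → ℝ | ∃ j : Fin k, v = eVec (Fc j.succ)} :=
  span_range_eVec_le h0 (csm_k_balanced_general M Fc hmono.monotone hflat _)
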